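/- Let a ≤ b be real numbers, let s > 0, let h̃: [a,b] → [0,1] be a unimodal function, and let Y be a real-valued random variable with P(Y ∈ [a, b−s]) = 1. Then |E[h̃(Y+s)] − E[h̃(Y)]| ≤ 2·Q(Y;s). -/

import Mathlib

open MeasureTheory ProbabilityTheory Filter Set
open scoped ENNReal

/-- The concentration (Lévy) function `Q(Y;λ) = sup_{x ∈ ℝ} P(x ≤ Y ≤ x + λ)`. -/
noncomputable def concQ {Ω : Type*} [MeasurableSpace Ω] (μ : Measure Ω)
    (Y : Ω → ℝ) (lam : ℝ) : ℝ :=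
  ⨆ x : ℝ, (μ {ω | x ≤ Y ω ∧ Y ω ≤ x + lam}).toReal

theorem concQ_nonneg {Ω : Type*} [MeasurableSpace Ω] (μ : Measure Ω) (Y : Ω → ℝ) (s : ℝ) :
    0 ≤ concQ μ Y s :=
  Real.iSup_nonneg fun _ => ENNReal.toReal_nonneg

theorem measureReal_le_concQ {Ω : Type*} [MeasurableSpace Ω] (μ : Measure Ω)
    [IsProbabilityMeasure μ] (Y : Ω → ℝ) (s x : ℝ) :
    μ.real {ω | x ≤ Y ω ∧ Y ω ≤ x + s} ≤ concQ μ Y s :=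
  le_ciSup (f := fun x : ℝ => (μ {ω | x ≤ Y ω ∧ Y ω ≤ x + s}).toReal)
    ⟨1, by rintro _ ⟨y, rfl⟩; exact measureReal_le_one⟩ x

/-- If a set of outcomes is contained in another one up to an event confining `Y` to an interval
of length `s`, its probability exceeds the other by at most `concQ μ Y s`. -/
theorem measureReal_sub_le_concQ {Ω : Type*} [MeasurableSpace Ω] (μ : Measure Ω)
    [IsProbabilityMeasure μ] (Y : Ω → ℝ) (s x : ℝ) {A B : Set Ω}
    (hAB : ∀ ω ∈ A, ω ∉ B → x ≤ Y ω ∧ Y ω ≤ x + s) :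
    μ.real A - μ.real B ≤ concQ μ Y s := by
  have hsub : A ⊆ B ∪ {ω | x ≤ Y ω ∧ Y ω ≤ x + s} := fun ω hω =>
    or_iff_not_imp_left.2 (hAB ω hω)
  have := (measureReal_mono hsub).trans (measureReal_union_le (μ := μ) _ _)
  linarith [measureReal_le_concQ μ Y s x]

/-- Shifting `Y` by `s` changes the probability of an interval by at most `concQ μ Y s`. -/
theorem Set.OrdConnected.abs_measureReal_shift_sub_le_concQ {Ω : Type*} [MeasurableSpace Ω]
    (μ : Measure Ω) [IsProbabilityMeasure μ] (Y : Ω → ℝ) {s : ℝ} (hs : 0 < s) {S : Set ℝ}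
    (hS : S.OrdConnected) :
    |μ.real {ω | Y ω + s ∈ S} - μ.real {ω | Y ω ∈ S}| ≤ concQ μ Y s := by
  refine abs_sub_le_iff.2 ⟨measureReal_sub_le_concQ μ Y s (sInf S - s) ?_,
    measureReal_sub_le_concQ μ Y s (sSup S - s) ?_⟩
  · intro ω (h₁ : Y ω + s ∈ S) (h₂ : Y ω ∉ S)
    have hlb : Y ω ∈ lowerBounds S := fun z hz => by
      by_contra! hlt
      exact h₂ (hS.out hz h₁ ⟨hlt.le, by linarith⟩)
    have := csInf_le ⟨_, hlb⟩ h₁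
    have := le_csInf ⟨_, h₁⟩ hlb
    constructor <;> linarith
  · intro ω (h₁ : Y ω ∈ S) (h₂ : Y ω + s ∉ S)
    have hub : Y ω + s ∈ upperBounds S := fun z hz => by
      by_contra! hlt
      exact h₂ (hS.out h₁ hz ⟨by linarith, hlt.le⟩)
    have := le_csSup ⟨_, hub⟩ h₁
    have := csSup_le ⟨_, h₁⟩ hub
    constructor <;> linarith

theorem measurable_of_ordConnected_superlevel {g : ℝ → ℝ}
    (hg : ∀ u, {x | u ≤ g x}.OrdConnected) : Measurable g :=
  measurable_of_Ici fun u => (hg u).measurableSet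

theorem abs_integral_shift_sub_le_concQ {Ω : Type*} [MeasurableSpace Ω] (μ : Measure Ω)
    [IsProbabilityMeasure μ] {Y : Ω → ℝ} (hY : Measurable Y) {s : ℝ} (hs : 0 < s) {g : ℝ → ℝ}
    (hg : ∀ u, {x | u ≤ g x}.OrdConnected) (hg01 : ∀ x, g x ∈ Icc (0 : ℝ) 1) :
    |(∫ ω, g (Y ω + s) ∂μ) - ∫ ω, g (Y ω) ∂μ| ≤ concQ μ Y s := by
  have hgm := measurable_of_ordConnected_superlevel hg
  have layer (X : Ω → ℝ) (hX : Measurable X) :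
      ∫ ω, g (X ω) ∂μ = ∫ u in (0 : ℝ)..1, μ.real {ω | u ≤ g (X ω)} := by
    rw [intervalIntegral.integral_of_le zero_le_one]
    refine Integrable.integral_eq_integral_Ioc_meas_le ?_ (.of_forall fun ω => (hg01 _).1)
      (.of_forall fun ω => (hg01 _).2)
    exact .of_mem_Icc 0 1 (hgm.comp hX).aemeasurable (.of_forall fun ω => hg01 _)
  have hint (X : Ω → ℝ) :
      IntervalIntegrable (fun u => μ.real {ω | u ≤ g (X ω)}) volume 0 1 :=
    Antitone.intervalIntegrable fun u v huv =>
      measureReal_mono fun ω (hω : v ≤ g (X ω)) => huv.trans hω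
  rw [layer _ (hY.add_const s), layer _ hY, ← intervalIntegral.integral_sub (hint _) (hint _)]
  have := intervalIntegral.norm_integral_le_of_norm_le_const (a := 0) (b := 1)
    (f := fun u => μ.real {ω | u ≤ g (Y ω + s)} - μ.real {ω | u ≤ g (Y ω)}) fun u _ =>
      (hg u).abs_measureReal_shift_sub_le_concQ μ Y hs
  simpa using this

theorem ordConnected_superlevel_indicator_of_unimodal {a b t : ℝ} {h : ℝ → ℝ}
    (hmono : MonotoneOn h (Icc a t)) (hanti : AntitoneOn h (Icc t b))
    (hnonneg : ∀ x ∈ Icc a b, 0 ≤ h x) (u : ℝ) :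
    {x | u ≤ (Icc a b).indicator h x}.OrdConnected := by
  rcases le_or_gt u 0 with hu | hu
  · convert ordConnected_univ
    exact eq_univ_of_forall fun x => hu.trans (indicator_nonneg hnonneg x)
  · have hmem {x : ℝ} (hx : u ≤ (Icc a b).indicator h x) : x ∈ Icc a b ∧ u ≤ h x := by
      by_cases hxs : x ∈ Icc a b
      · exact ⟨hxs, by rwa [indicator_of_mem hxs] at hx⟩
      · rw [indicator_of_notMem hxs] at hx
        exact absurd hx hu.not_ge
    refine ⟨fun x hx y hy z hz => ?_⟩
    obtain ⟨hxs, hxu⟩ := hmem hx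
    obtain ⟨hys, hyu⟩ := hmem hy
    have hzs : z ∈ Icc a b := ⟨hxs.1.trans hz.1, hz.2.trans hys.2⟩
    rw [mem_ofPred_eq, indicator_of_mem hzs]
    rcases le_total z t with hzt | htz
    · exact hxu.trans (hmono ⟨hxs.1, hz.1.trans hzt⟩ ⟨hzs.1, hzt⟩ hz.1)
    · exact hyu.trans (hanti ⟨htz, hzs.2⟩ ⟨htz.trans hz.2, hys.2⟩ hz.2)

/-- For a unimodal function `h̃ : [a,b] → [0,1]`, `s > 0` and a
real random variable `Y` with `P(Y ∈ [a, b−s]) = 1`,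
`|E[h̃(Y+s)] − E[h̃(Y)]| ≤ 2·Q(Y;s)`. -/
theorem stmt8
    {Ω : Type*} [MeasurableSpace Ω] (μ : Measure Ω) [IsProbabilityMeasure μ]
    (a b : ℝ) (hab : a ≤ b) (s : ℝ) (hs : 0 < s)
    (h : ℝ → ℝ)
    (huni : ∃ t ∈ Set.Icc a b,
      MonotoneOn h (Set.Icc a t) ∧ AntitoneOn h (Set.Icc t b))
    (hrange : ∀ x ∈ Set.Icc a b, h x ∈ Set.Icc (0 : ℝ) 1)
    (Y : Ω → ℝ) (hY : Measurable Y)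
    (hYsupp : ∀ᵐ ω ∂μ, Y ω ∈ Set.Icc a (b - s)) :
    |(∫ ω, h (Y ω + s) ∂μ) - ∫ ω, h (Y ω) ∂μ| ≤ 2 * concQ μ Y s := by
  obtain ⟨t, -, hmono, hanti⟩ := huni
  have hshift : ∫ ω, h (Y ω + s) ∂μ = ∫ ω, (Icc a b).indicator h (Y ω + s) ∂μ := by
    refine integral_congr_ae (hYsupp.mono fun ω hω => (indicator_of_mem ?_ h).symm)
    exact ⟨by linarith [hω.1], by linarith [hω.2]⟩
  have hbase : ∫ ω, h (Y ω) ∂μ = ∫ ω, (Icc a b).indicator h (Y ω) ∂μ := by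
    refine integral_congr_ae (hYsupp.mono fun ω hω => (indicator_of_mem ?_ h).symm)
    exact ⟨hω.1, by linarith [hω.2]⟩
  have hle := abs_integral_shift_sub_le_concQ μ hY hs
    (ordConnected_superlevel_indicator_of_unimodal hmono hanti fun x hx => (hrange x hx).1)
    fun x => ⟨indicator_nonneg (fun x hx => (hrange x hx).1) x,
      indicator_le' (g := 1) (fun x hx => (hrange x hx).2) (fun _ _ => zero_le_one) x⟩
  rw [hshift, hbase]
  linarith [concQ_nonneg μ Y s]
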